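/- arXiv:2109.08397 — 2 statements merged into one kernel-verified Lean document; each statement's English description precedes it below -/
import Mathlib

section
/- (Conditional mean of RWG increments.) For every n ≥ 0, almost surely E[ξ_{n+1} | F_n] = μ + θ·i_n + m·j_n + ρ·k_n, where i_n = 1_{S_n∈V_{0,0}∪V_{0,1}} − 1_{S_n∈V_{1,0}∪V_{1,1}}, j_n = 1_{S_n∈V_{0,0}∪V_{1,0}} − 1_{S_n∈V_{0,1}∪V_{1,1}}, k_n = 1_{S_n∈V_{0,0}∪V_{1,1}} − 1_{S_n∈V_{0,1}∪V_{1,0}}. -/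
open MeasureTheory ProbabilityTheory Real Filter Set
open scoped BigOperators NNReal

noncomputable section

namespace RWG

abbrev E : Type := EuclideanSpace ℝ (Fin 3)

def vec (x y z : ℝ) : E := (EuclideanSpace.equiv (Fin 3) ℝ).symm ![x, y, z]

/-- The four families of vertices of the `2h` graphite lattice. -/
def V (a h : ℝ) (i j : Fin 2) : Set E :=
  {v | ∃ k l n : ℤ, v =
    vec (a * ((-1 : ℝ) ^ ((i : ℕ) + 1) * (if j = 1 then (1 : ℝ) else 0) + (3 / 2) * k))
        (a * ((Real.sqrt 3 / 2) * k + Real.sqrt 3 * l))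
        (h * (2 * n + (if i ≠ j then (1 : ℝ) else 0)))}

/-- Horizontal jump from a vertex of horizontal type `i` in direction `k`. -/
def w (a : ℝ) (i : Fin 2) (k : Fin 3) : E :=
  vec (a * Real.cos (2 * (k : ℕ) * π / 3 + (i : ℕ) * π))
      (a * Real.sin (2 * (k : ℕ) * π / 3 + (i : ℕ) * π)) 0

/-- `S` is a random walk on graphite with parameters `a, h, p, α, q` and natural filtration `F`. -/
structure IsRWG {Ω : Type} [MeasurableSpace Ω] (P : Measure Ω)
    (a h p α : ℝ) (q : Fin 2 → Fin 2 → Fin 3 → ℝ)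
    (S : ℕ → Ω → E) (F : ℕ → MeasurableSpace Ω) : Prop where
  prob : IsProbabilityMeasure P
  ha : 0 < a
  hh : 0 < h
  hp0 : 0 ≤ p
  hp1 : p ≤ 1
  hα0 : 0 < α
  hα1 : α < 1
  hq : ∀ i j k, 0 ≤ q i j k
  hqsum0 : ∀ i, q i 0 0 + q i 0 1 + q i 0 2 = 1 - p
  hqsum1 : ∀ i, q i 1 0 + q i 1 1 + q i 1 2 = 1
  hS0 : ∀ ω, S 0 ω = 0
  hSmeas : ∀ n, Measurable (S n)
  hF : ∀ n, F n =
    MeasurableSpace.comap (fun ω (k : Fin n) => S ((k : ℕ) + 1) ω - S (k : ℕ) ω)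
      MeasurableSpace.pi
  hTrans : ∀ (n : ℕ) (f : E → ℝ), Measurable f → (∃ C, ∀ x, |f x| ≤ C) →
    P[fun ω => f (S (n + 1) ω)|F n] =ᵐ[P]
      fun ω => ∑ i : Fin 2,
        ((V a h i 0).indicator (fun _ => (1 : ℝ)) (S n ω) *
          (α * p * f (S n ω + vec 0 0 h) + (1 - α) * p * f (S n ω + vec 0 0 (-h)) +
            ∑ k : Fin 3, q i 0 k * f (S n ω + w a i k)) +
        (V a h i 1).indicator (fun _ => (1 : ℝ)) (S n ω) *
          ∑ k : Fin 3, q i 1 k * f (S n ω + w a i k))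

def uu (q : Fin 2 → Fin 2 → Fin 3 → ℝ) (i j : Fin 2) : ℝ := q i j 1 + q i j 2

def vv (q : Fin 2 → Fin 2 → Fin 3 → ℝ) (i j : Fin 2) : ℝ := q i j 1 - q i j 2

def ss (q : Fin 2 → Fin 2 → Fin 3 → ℝ) (i j : Fin 2) : ℝ := uu q i j * (1 - uu q i j)

def tt (q : Fin 2 → Fin 2 → Fin 3 → ℝ) (i j : Fin 2) : ℝ := vv q i j * (uu q i j - 1)

/-- The vector `μ` of the RWG. -/
def muG (a h p α : ℝ) (q : Fin 2 → Fin 2 → Fin 3 → ℝ) : E :=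
  vec (3 * a / 8 * (-(uu q 0 0 + uu q 0 1) + (uu q 1 0 + uu q 1 1)))
      (a * Real.sqrt 3 / 8 * ((vv q 0 0 + vv q 0 1) - (vv q 1 0 + vv q 1 1)))
      (h * p / 2 * (2 * α - 1))

/-- The vector `m` of the RWG. -/
def mG (a h p α : ℝ) (q : Fin 2 → Fin 2 → Fin 3 → ℝ) : E :=
  vec (3 * a / 8 * (-(uu q 0 0 - uu q 0 1) + (uu q 1 0 - uu q 1 1)))
      (a * Real.sqrt 3 / 8 * ((vv q 0 0 - vv q 0 1) - (vv q 1 0 - vv q 1 1)))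
      (h * p / 2 * (2 * α - 1))

/-- The vector `θ` of the RWG. -/
def thetaG (a p : ℝ) (q : Fin 2 → Fin 2 → Fin 3 → ℝ) : E :=
  vec (a * ((1 - p / 2) - 3 / 8 * ((uu q 0 0 + uu q 0 1) + (uu q 1 0 + uu q 1 1))))
      (a * Real.sqrt 3 / 8 * ((vv q 0 0 + vv q 0 1) + (vv q 1 0 + vv q 1 1))) 0

/-- The vector `ρ` of the RWG. -/
def rhoG (a p : ℝ) (q : Fin 2 → Fin 2 → Fin 3 → ℝ) : E :=
  vec (a * (-(p / 2) - 3 / 8 * ((uu q 0 0 - uu q 0 1) + (uu q 1 0 - uu q 1 1))))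
      (a * Real.sqrt 3 / 8 * ((vv q 0 0 - vv q 0 1) + (vv q 1 0 - vv q 1 1))) 0

/-- The vector `ζ = (0, 0, hp(2α−1))`. -/
def zetaG (h p α : ℝ) : E := vec 0 0 (h * p * (2 * α - 1))

/-- The indicator process `i_n`. -/
def iP {Ω : Type} (a h : ℝ) (S : ℕ → Ω → E) (n : ℕ) (ω : Ω) : ℝ :=
  (V a h 0 0 ∪ V a h 0 1).indicator (fun _ => (1 : ℝ)) (S n ω) -
    (V a h 1 0 ∪ V a h 1 1).indicator (fun _ => (1 : ℝ)) (S n ω)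

/-- The indicator process `j_n`. -/
def jP {Ω : Type} (a h : ℝ) (S : ℕ → Ω → E) (n : ℕ) (ω : Ω) : ℝ :=
  (V a h 0 0 ∪ V a h 1 0).indicator (fun _ => (1 : ℝ)) (S n ω) -
    (V a h 0 1 ∪ V a h 1 1).indicator (fun _ => (1 : ℝ)) (S n ω)

/-- The indicator process `k_n`. -/
def kP {Ω : Type} (a h : ℝ) (S : ℕ → Ω → E) (n : ℕ) (ω : Ω) : ℝ :=
  (V a h 0 0 ∪ V a h 1 1).indicator (fun _ => (1 : ℝ)) (S n ω) -
    (V a h 0 1 ∪ V a h 1 0).indicator (fun _ => (1 : ℝ)) (S n ω)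

/-- The matrix `σ²` of the RWG. -/
def sigmaG (a h p α : ℝ) (q : Fin 2 → Fin 2 → Fin 3 → ℝ) : Matrix (Fin 3) (Fin 3) ℝ :=
  !![a ^ 2 / 4 * (2 * p * (1 - p) + 9 / 4 * (ss q 0 0 + ss q 1 0 + ss q 0 1 + ss q 1 1)
        - 3 * p * (uu q 0 0 + uu q 1 0)),
     a ^ 2 * Real.sqrt 3 / 16 * (3 * (tt q 0 0 + tt q 1 0 + tt q 0 1 + tt q 1 1)
        + 2 * p * (vv q 0 0 + vv q 1 0)),
     a * h / 8 * (-4 * p * (1 - p) * (2 * α - 1)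
        + 3 * p * (2 * α - 1) * (uu q 0 0 + uu q 1 0));
     a ^ 2 * Real.sqrt 3 / 16 * (3 * (tt q 0 0 + tt q 1 0 + tt q 0 1 + tt q 1 1)
        + 2 * p * (vv q 0 0 + vv q 1 0)),
     3 * a ^ 2 / 16 * ((uu q 0 0 + uu q 1 0 + uu q 0 1 + uu q 1 1)
        - ((vv q 0 0) ^ 2 + (vv q 1 0) ^ 2 + (vv q 0 1) ^ 2 + (vv q 1 1) ^ 2)),
     -(a * h * Real.sqrt 3 / 8) * (p * (2 * α - 1) * (vv q 0 0 + vv q 1 0));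
     a * h / 8 * (-4 * p * (1 - p) * (2 * α - 1)
        + 3 * p * (2 * α - 1) * (uu q 0 0 + uu q 1 0)),
     -(a * h * Real.sqrt 3 / 8) * (p * (2 * α - 1) * (vv q 0 0 + vv q 1 0)),
     h ^ 2 * p / 2 * (1 - p * (2 * α - 1) ^ 2)]

/-- The matrix `γ` of the RWG. -/
def gammaG (a h p α : ℝ) (q : Fin 2 → Fin 2 → Fin 3 → ℝ) : Matrix (Fin 3) (Fin 3) ℝ :=
  !![a ^ 2 / 4 * (2 * p * (1 - p) + 9 / 4 * (ss q 0 0 + ss q 1 0 - ss q 0 1 - ss q 1 1)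
        - 3 * p * (uu q 0 0 + uu q 1 0)),
     a ^ 2 * Real.sqrt 3 / 16 * (3 * (tt q 0 0 + tt q 1 0 - tt q 0 1 - tt q 1 1)
        + 2 * p * (vv q 0 0 + vv q 1 0)),
     a * h / 8 * (-4 * p * (1 - p) * (2 * α - 1)
        + 3 * p * (2 * α - 1) * (uu q 0 0 + uu q 1 0));
     a ^ 2 * Real.sqrt 3 / 16 * (3 * (tt q 0 0 + tt q 1 0 - tt q 0 1 - tt q 1 1)
        + 2 * p * (vv q 0 0 + vv q 1 0)),
     3 * a ^ 2 / 16 * ((uu q 0 0 + uu q 1 0 - uu q 0 1 - uu q 1 1)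
        - ((vv q 0 0) ^ 2 + (vv q 1 0) ^ 2 - (vv q 0 1) ^ 2 - (vv q 1 1) ^ 2)),
     -(a * h * Real.sqrt 3 / 8) * (p * (2 * α - 1) * (vv q 0 0 + vv q 1 0));
     a * h / 8 * (-4 * p * (1 - p) * (2 * α - 1)
        + 3 * p * (2 * α - 1) * (uu q 0 0 + uu q 1 0)),
     -(a * h * Real.sqrt 3 / 8) * (p * (2 * α - 1) * (vv q 0 0 + vv q 1 0)),
     h ^ 2 * p / 2 * (1 - p * (2 * α - 1) ^ 2)]

/-- The matrix `δ` of the RWG. -/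
def deltaG (a h p α : ℝ) (q : Fin 2 → Fin 2 → Fin 3 → ℝ) : Matrix (Fin 3) (Fin 3) ℝ :=
  !![a ^ 2 / 4 * (9 / 4 * (ss q 0 0 - ss q 1 0 - ss q 0 1 + ss q 1 1)
        - 3 * p * (uu q 0 0 - uu q 1 0)),
     a ^ 2 * Real.sqrt 3 / 16 * (3 * (tt q 0 0 - tt q 1 0 - tt q 0 1 + tt q 1 1)
        + 2 * p * (vv q 0 0 - vv q 1 0)),
     a * h / 8 * (3 * p * (2 * α - 1) * (uu q 0 0 - uu q 1 0));
     a ^ 2 * Real.sqrt 3 / 16 * (3 * (tt q 0 0 - tt q 1 0 - tt q 0 1 + tt q 1 1)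
        + 2 * p * (vv q 0 0 - vv q 1 0)),
     3 * a ^ 2 / 16 * ((uu q 0 0 - uu q 1 0 - uu q 0 1 + uu q 1 1)
        - ((vv q 0 0) ^ 2 - (vv q 1 0) ^ 2 - (vv q 0 1) ^ 2 + (vv q 1 1) ^ 2)),
     -(a * h * Real.sqrt 3 / 8) * (p * (2 * α - 1) * (vv q 0 0 - vv q 1 0));
     a * h / 8 * (3 * p * (2 * α - 1) * (uu q 0 0 - uu q 1 0)),
     -(a * h * Real.sqrt 3 / 8) * (p * (2 * α - 1) * (vv q 0 0 - vv q 1 0)),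
     0]

/-- A probability measure on `ℝ³` is the centered Gaussian law with covariance matrix `Γ`
if every linear functional pushes it to the corresponding one-dimensional Gaussian law. -/
def IsCenteredGaussian (G : Measure E) (Γ : Matrix (Fin 3) (Fin 3) ℝ) : Prop :=
  IsProbabilityMeasure G ∧
    ∀ u : Fin 3 → ℝ, G.map (fun x => ∑ r, u r * x r) =
      gaussianReal 0 (Real.toNNReal (∑ r, ∑ c, u r * Γ r c * u c))

/-- View a point of `ℝ³` as a plain function on indices. -/
def toFun (x : E) : Fin 3 → ℝ := x

end RWG

namespace RWG

variable {Ω : Type} [MeasurableSpace Ω] {P : Measure Ω} {a h p α : ℝ}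
  {q : Fin 2 → Fin 2 → Fin 3 → ℝ} {S : ℕ → Ω → E} {F : ℕ → MeasurableSpace Ω}

/-- The one-step average of `f`, as it appears in the transition law. -/
def stepMean (a h p α : ℝ) (q : Fin 2 → Fin 2 → Fin 3 → ℝ) (f : E → ℝ) (x : E) : ℝ :=
  ∑ i : Fin 2,
    ((V a h i 0).indicator (fun _ => (1 : ℝ)) x *
      (α * p * f (x + vec 0 0 h) + (1 - α) * p * f (x + vec 0 0 (-h)) +
        ∑ k : Fin 3, q i 0 k * f (x + w a i k)) +
    (V a h i 1).indicator (fun _ => (1 : ℝ)) x *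
      ∑ k : Fin 3, q i 1 k * f (x + w a i k))

/-- The point `x` lies in exactly one of the four vertex families. -/
def OneFamily (a h : ℝ) (x : E) : Prop :=
  ∑ i : Fin 2, ∑ j : Fin 2, (V a h i j).indicator (fun _ => (1 : ℝ)) x = 1

/-- A bound for the length of every jump. -/
def maxJump (a h : ℝ) : ℝ :=
  ‖vec 0 0 h‖ + ‖vec 0 0 (-h)‖ + ∑ i : Fin 2, ∑ k : Fin 3, ‖w a i k‖

lemma norm_w_le_maxJump (a h : ℝ) (i : Fin 2) (k : Fin 3) : ‖w a i k‖ ≤ maxJump a h := by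
  have h1 : ‖w a i k‖ ≤ ∑ k : Fin 3, ‖w a i k‖ :=
    Finset.single_le_sum (f := fun k => ‖w a i k‖) (fun _ _ => norm_nonneg _) (Finset.mem_univ k)
  have h2 : ∑ k : Fin 3, ‖w a i k‖ ≤ ∑ i : Fin 2, ∑ k : Fin 3, ‖w a i k‖ :=
    Finset.single_le_sum (f := fun i => ∑ k : Fin 3, ‖w a i k‖)
      (fun _ _ => Finset.sum_nonneg fun _ _ => norm_nonneg _) (Finset.mem_univ i)
  unfold maxJump
  linarith [norm_nonneg (vec 0 0 h), norm_nonneg (vec 0 0 (-h))]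

lemma norm_up_le_maxJump (a h : ℝ) : ‖vec 0 0 h‖ ≤ maxJump a h := by
  unfold maxJump
  have : 0 ≤ ∑ i : Fin 2, ∑ k : Fin 3, ‖w a i k‖ := by positivity
  linarith [norm_nonneg (vec 0 0 (-h))]

lemma norm_down_le_maxJump (a h : ℝ) : ‖vec 0 0 (-h)‖ ≤ maxJump a h := by
  unfold maxJump
  have : 0 ≤ ∑ i : Fin 2, ∑ k : Fin 3, ‖w a i k‖ := by positivity
  linarith [norm_nonneg (vec 0 0 h)]

/-- `stepMean` only depends on the values of `f` within distance `maxJump` of the point. -/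
lemma stepMean_congr {f g : E → ℝ} {x : E}
    (hfg : ∀ v, ‖v‖ ≤ maxJump a h → f (x + v) = g (x + v)) :
    stepMean a h p α q f x = stepMean a h p α q g x := by
  simp only [stepMean, hfg _ (norm_w_le_maxJump a h _ _), hfg _ (norm_up_le_maxJump a h),
    hfg _ (norm_down_le_maxJump a h)]

lemma IsRWG.filtration_le (hRW : IsRWG P a h p α q S F) (n : ℕ) :
    F n ≤ (inferInstance : MeasurableSpace Ω) := by
  rw [hRW.hF n]
  refine Measurable.comap_le ?_
  exact measurable_pi_lambda _ fun k => (hRW.hSmeas _).sub (hRW.hSmeas _)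

lemma IsRWG.measurable_filtration (hRW : IsRWG P a h p α q S F) (n : ℕ) :
    Measurable[F n] (S n) := by
  have hS : S n = fun ω => ∑ k : Fin n, (S ((k : ℕ) + 1) ω - S (k : ℕ) ω) := by
    funext ω
    rw [Fin.sum_univ_eq_sum_range (fun k => S (k + 1) ω - S k ω),
      Finset.sum_range_sub (fun k => S k ω), hRW.hS0, sub_zero]
  have hsum : Measurable fun x : Fin n → E => ∑ k, x k := by fun_prop
  rw [hS, hRW.hF n]
  exact hsum.comp (comap_measurable _)

lemma IsRWG.condExp_comp (hRW : IsRWG P a h p α q S F) (n : ℕ) {f : E → ℝ} (hf : Measurable f)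
    (hb : ∃ C, ∀ x, |f x| ≤ C) :
    P[fun ω => f (S (n + 1) ω)|F n] =ᵐ[P] fun ω => stepMean a h p α q f (S n ω) :=
  hRW.hTrans n f hf hb

lemma IsRWG.ae_oneFamily (hRW : IsRWG P a h p α q S F) (n : ℕ) :
    ∀ᵐ ω ∂P, OneFamily a h (S n ω) := by
  have := hRW.prob
  have hc := hRW.condExp_comp n (f := fun _ => 1) measurable_const ⟨1, by simp⟩
  rw [condExp_const (hRW.filtration_le n)] at hc
  filter_upwards [hc] with ω hω
  have h00 := hRW.hqsum0 0
  have h10 := hRW.hqsum0 1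
  have h01 := hRW.hqsum1 0
  have h11 := hRW.hqsum1 1
  simp only [stepMean, Fin.sum_univ_two, Fin.sum_univ_three, mul_one, h00, h10, h01, h11] at hω
  simp only [OneFamily, Fin.sum_univ_two]
  linear_combination -hω

lemma IsRWG.ae_norm_succ_le (hRW : IsRWG P a h p α q S F) {n : ℕ} {C : ℝ}
    (hC : ∀ᵐ ω ∂P, ‖S n ω‖ ≤ C) : ∀ᵐ ω ∂P, ‖S (n + 1) ω‖ ≤ C + maxJump a h := by
  have := hRW.prob
  set B : Set E := {x | C + maxJump a h < ‖x‖}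
  have hB : MeasurableSet B := measurableSet_lt measurable_const measurable_norm
  set f : E → ℝ := B.indicator fun _ => 1
  have hf : Measurable f := measurable_const.indicator hB
  have hf0 : ∀ x, 0 ≤ f x := fun x => indicator_nonneg (fun _ _ => zero_le_one) x
  have hf1 : ∀ x, |f x| ≤ 1 := fun x => by
    rw [abs_of_nonneg (hf0 x)]
    exact indicator_le_self' (fun _ _ => zero_le_one) x
  have hzero : P[fun ω => f (S (n + 1) ω)|F n] =ᵐ[P] 0 := by
    filter_upwards [hRW.condExp_comp n hf ⟨1, hf1⟩, hC] with ω hω hCω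
    rw [hω, stepMean_congr (g := fun _ => 0)]
    · simp [stepMean]
    · intro v hv
      refine indicator_of_notMem ?_ _
      simp only [B, mem_ofPred_eq, not_lt]
      exact (norm_add_le _ _).trans (add_le_add hCω hv)
  have hint : Integrable (fun ω => f (S (n + 1) ω)) P :=
    .of_bound (hf.comp (hRW.hSmeas _)).aestronglyMeasurable 1 (ae_of_all _ fun ω => hf1 _)
  have hI : ∫ ω, f (S (n + 1) ω) ∂P = 0 := by
    rw [← integral_condExp (hRW.filtration_le n), integral_congr_ae hzero]
    simp
  rw [integral_eq_zero_iff_of_nonneg (fun ω => hf0 _) hint] at hI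
  filter_upwards [hI] with ω hω
  by_contra! hlt
  have : f (S (n + 1) ω) = 1 := indicator_of_mem (s := B) hlt _
  simp [this] at hω

lemma IsRWG.exists_ae_norm_le (hRW : IsRWG P a h p α q S F) (n : ℕ) :
    ∃ C, ∀ᵐ ω ∂P, ‖S n ω‖ ≤ C := by
  induction n with
  | zero => exact ⟨0, ae_of_all _ fun ω => by simp [hRW.hS0]⟩
  | succ n ih =>
    obtain ⟨C, hC⟩ := ih
    exact ⟨_, hRW.ae_norm_succ_le hC⟩

lemma IsRWG.integrable (hRW : IsRWG P a h p α q S F) (n : ℕ) : Integrable (S n) P := by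
  have := hRW.prob
  obtain ⟨C, hC⟩ := hRW.exists_ae_norm_le n
  exact .of_bound (hRW.hSmeas n).aestronglyMeasurable C hC

/-- The transition law extends to continuous linear functionals, although they are unbounded. -/
lemma IsRWG.condExp_clm (hRW : IsRWG P a h p α q S F) (n : ℕ) (L : E →L[ℝ] ℝ) :
    P[fun ω => L (S (n + 1) ω)|F n] =ᵐ[P] fun ω => stepMean a h p α q L (S n ω) := by
  obtain ⟨C, hC⟩ := hRW.exists_ae_norm_le n
  set B : Set E := {x | ‖x‖ ≤ C + maxJump a h}
  have hB : MeasurableSet B := measurableSet_le measurable_norm measurable_const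
  have hf : Measurable (B.indicator L) := L.measurable.indicator hB
  have hb : ∃ K, ∀ x, |B.indicator L x| ≤ K := by
    refine ⟨‖L‖ * |C + maxJump a h|, fun x => ?_⟩
    by_cases hx : x ∈ B
    · rw [indicator_of_mem hx]
      refine (L.le_opNorm x).trans ?_
      gcongr
      exact le_trans hx (le_abs_self _)
    · rw [indicator_of_notMem hx, abs_zero]
      positivity
  have hcongr : (fun ω => L (S (n + 1) ω)) =ᵐ[P] fun ω => B.indicator L (S (n + 1) ω) := by
    filter_upwards [hRW.ae_norm_succ_le hC] with ω hω
    exact (indicator_of_mem (s := B) hω _).symm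
  refine (condExp_congr_ae hcongr).trans ?_
  filter_upwards [hRW.condExp_comp n hf hb, hC] with ω hω hCω
  rw [hω]
  refine stepMean_congr fun v hv => indicator_of_mem (s := B) ?_ _
  exact (norm_add_le _ _).trans (add_le_add hCω hv)

/-- The drift of the walk at `x`, written through the four sign combinations of its type. -/
def drift (a h p α : ℝ) (q : Fin 2 → Fin 2 → Fin 3 → ℝ) (x : E) : E :=
  muG a h p α q +
    ((V a h 0 0 ∪ V a h 0 1).indicator (fun _ => (1 : ℝ)) x -
      (V a h 1 0 ∪ V a h 1 1).indicator (fun _ => (1 : ℝ)) x) • thetaG a p q +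
    ((V a h 0 0 ∪ V a h 1 0).indicator (fun _ => (1 : ℝ)) x -
      (V a h 0 1 ∪ V a h 1 1).indicator (fun _ => (1 : ℝ)) x) • mG a h p α q +
    ((V a h 0 0 ∪ V a h 1 1).indicator (fun _ => (1 : ℝ)) x -
      (V a h 0 1 ∪ V a h 1 0).indicator (fun _ => (1 : ℝ)) x) • rhoG a p q

lemma cos_two_pi_div_three : Real.cos (2 * π / 3) = -(1 / 2) := by
  rw [show 2 * π / 3 = π - π / 3 by ring, Real.cos_pi_sub, Real.cos_pi_div_three]

lemma sin_two_pi_div_three : Real.sin (2 * π / 3) = √3 / 2 := by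
  rw [show 2 * π / 3 = π - π / 3 by ring, Real.sin_pi_sub, Real.sin_pi_div_three]

lemma cos_four_pi_div_three : Real.cos (2 * 2 * π / 3) = -(1 / 2) := by
  rw [show 2 * 2 * π / 3 = π / 3 + π by ring, Real.cos_add_pi, Real.cos_pi_div_three]

lemma sin_four_pi_div_three : Real.sin (2 * 2 * π / 3) = -(√3 / 2) := by
  rw [show 2 * 2 * π / 3 = π / 3 + π by ring, Real.sin_add_pi, Real.sin_pi_div_three]

lemma stepMean_coord (h0 : ∀ i, q i 0 0 + q i 0 1 + q i 0 2 = 1 - p)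
    (h1 : ∀ i, q i 1 0 + q i 1 1 + q i 1 2 = 1) {x : E} (hx : OneFamily a h x) (r : Fin 3) :
    stepMean a h p α q (fun y => y r) x = x r + drift a h p α q x r := by
  have e00 : q 0 0 0 = 1 - p - q 0 0 1 - q 0 0 2 := by linarith [h0 0]
  have e10 : q 1 0 0 = 1 - p - q 1 0 1 - q 1 0 2 := by linarith [h0 1]
  have e01 : q 0 1 0 = 1 - q 0 1 1 - q 0 1 2 := by linarith [h1 0]
  have e11 : q 1 1 0 = 1 - q 1 1 1 - q 1 1 2 := by linarith [h1 1]
  by_cases m00 : x ∈ V a h 0 0 <;> by_cases m01 : x ∈ V a h 0 1 <;>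
    by_cases m10 : x ∈ V a h 1 0 <;> by_cases m11 : x ∈ V a h 1 1 <;>
    first
    | (exfalso
       norm_num [OneFamily, Fin.sum_univ_two, m00, m01, m10, m11] at hx
       done)
    | (fin_cases r <;>
        simp [stepMean, drift, Fin.sum_univ_two, Fin.sum_univ_three, m00, m01, m10, m11, w, vec,
          muG, mG, thetaG, rhoG, uu, vv, e00, e10, e01, e11, Real.cos_add_pi, Real.sin_add_pi,
          cos_two_pi_div_three, sin_two_pi_div_three, cos_four_pi_div_three,
          sin_four_pi_div_three] <;>
        ring)

end RWG

theorem rwg_condexp_increment {Ω : Type} [MeasurableSpace Ω] (P : Measure Ω)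
    (a h p α : ℝ) (q : Fin 2 → Fin 2 → Fin 3 → ℝ)
    (S : ℕ → Ω → RWG.E) (F : ℕ → MeasurableSpace Ω)
    (hRW : RWG.IsRWG P a h p α q S F) :
    ∀ n : ℕ, P[fun ω => S (n + 1) ω - S n ω|F n] =ᵐ[P]
      fun ω => RWG.muG a h p α q + RWG.iP a h S n ω • RWG.thetaG a p q +
        RWG.jP a h S n ω • RWG.mG a h p α q + RWG.kP a h S n ω • RWG.rhoG a p q := by
  intro n
  have := hRW.prob
  have hle := hRW.filtration_le n
  have hsub : P[fun ω => S (n + 1) ω - S n ω|F n] =ᵐ[P]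
      P[S (n + 1)|F n] - P[S n|F n] :=
    condExp_sub (hRW.integrable _) (hRW.integrable _) (F n)
  rw [condExp_of_stronglyMeasurable hle (hRW.measurable_filtration n).stronglyMeasurable
    (hRW.integrable n)] at hsub
  have hcoord : ∀ᵐ ω ∂P, ∀ r : Fin 3, (P[S (n + 1)|F n] ω) r =
      RWG.stepMean a h p α q (fun y => y r) (S n ω) := by
    rw [ae_all_iff]
    intro r
    have hcomm := (EuclideanSpace.proj r : RWG.E →L[ℝ] ℝ).comp_condExp_comm
      (m := F n) (hRW.integrable (n + 1))
    filter_upwards [hcomm, hRW.condExp_clm n (EuclideanSpace.proj r)] with ω h1 h2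
    exact h1.trans h2
  filter_upwards [hsub, hcoord, hRW.ae_oneFamily n] with ω h1 h2 h3
  rw [h1]
  ext r
  change (P[S (n + 1)|F n] ω) r - S n ω r = RWG.drift a h p α q (S n ω) r
  rw [h2 r, RWG.stepMean_coord hRW.hqsum0 hRW.hqsum1 h3]
  ring
end
end

section
/- (Structure of the RWG indicator processes.) Let i_n = 1_{S_n∈V_{0,0}∪V_{0,1}} − 1_{S_n∈V_{1,0}∪V_{1,1}}, j_n = 1_{S_n∈V_{0,0}∪V_{1,0}} − 1_{S_n∈V_{0,1}∪V_{1,1}}, k_n = 1_{S_n∈V_{0,0}∪V_{1,1}} − 1_{S_n∈V_{0,1}∪V_{1,0}}. Then: (i) for every n ≥ 0, almost surely i_n = (−1)^n, i_n·j_n = k_n, j_n·k_n = i_n, i_n·k_n = j_n; (ii) for every n ≥ 0, almost surely E[j_{n+1} | F_n] = p − (1−p)·j_n and E[k_{n+1} | F_n] = (1−p)·k_n − p·i_n. -/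
open MeasureTheory ProbabilityTheory Real Filter Set
open scoped BigOperators NNReal

noncomputable section

namespace RWG

lemma vec_add (x y z x' y' z' : ℝ) :
    vec x y z + vec x' y' z' = vec (x + x') (y + y') (z + z') := by
  ext r
  fin_cases r <;> simp [vec]

lemma vec_inj {x y z x' y' z' : ℝ} (e : vec x y z = vec x' y' z') :
    x = x' ∧ y = y' ∧ z = z' := by
  refine ⟨?_, ?_, ?_⟩
  · simpa [vec] using congrArg (fun v : E => v 0) e
  · simpa [vec] using congrArg (fun v : E => v 1) e
  · simpa [vec] using congrArg (fun v : E => v 2) e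

/-- Horizontal jumps in lattice coordinates. -/
lemma w_eq_vec (a : ℝ) (i : Fin 2) (k : Fin 3) :
    ∃ m l : ℤ, w a i k = vec (a * ((-1 : ℝ) ^ (i : ℕ) * (1 + 3 / 2 * m)))
      (a * ((-1 : ℝ) ^ (i : ℕ) * (√3 / 2 * m + √3 * l))) 0 := by
  have key : ∀ k : Fin 3, ∃ m l : ℤ, cos (2 * (k : ℕ) * π / 3) = 1 + 3 / 2 * m ∧
      sin (2 * (k : ℕ) * π / 3) = √3 / 2 * m + √3 * l := by
    intro k
    fin_cases k
    · exact ⟨0, 0, by simp, by simp⟩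
    · refine ⟨-1, 1, ?_, ?_⟩
      · change cos (2 * ((1 : ℕ) : ℝ) * π / 3) = _
        rw [show 2 * ((1 : ℕ) : ℝ) * π / 3 = π - π / 3 by push_cast; ring, cos_pi_sub,
          cos_pi_div_three]
        norm_num
      · change sin (2 * ((1 : ℕ) : ℝ) * π / 3) = _
        rw [show 2 * ((1 : ℕ) : ℝ) * π / 3 = π - π / 3 by push_cast; ring, sin_pi_sub,
          sin_pi_div_three]
        push_cast
        ring
    · refine ⟨-1, 0, ?_, ?_⟩
      · change cos (2 * ((2 : ℕ) : ℝ) * π / 3) = _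
        rw [show 2 * ((2 : ℕ) : ℝ) * π / 3 = π / 3 + π by push_cast; ring, cos_add_pi,
          cos_pi_div_three]
        norm_num
      · change sin (2 * ((2 : ℕ) : ℝ) * π / 3) = _
        rw [show 2 * ((2 : ℕ) : ℝ) * π / 3 = π / 3 + π by push_cast; ring, sin_add_pi,
          sin_pi_div_three]
        push_cast
        ring
  obtain ⟨m, l, hc, hs⟩ := key k
  refine ⟨m, l, ?_⟩
  rw [w, cos_add_nat_mul_pi, sin_add_nat_mul_pi, hc, hs]

variable {a h : ℝ} {x : E}

lemma add_vec_up_mem_V {i : Fin 2} (hx : x ∈ V a h i 0) : x + vec 0 0 h ∈ V a h (i + 1) 0 := by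
  obtain ⟨k, l, n, rfl⟩ := hx
  fin_cases i
  · refine ⟨k, l, n, ?_⟩
    rw [vec_add]
    congr 1 <;> simp
    ring
  · refine ⟨k, l, n + 1, ?_⟩
    rw [vec_add]
    congr 1 <;> simp
    ring

lemma add_vec_down_mem_V {i : Fin 2} (hx : x ∈ V a h i 0) :
    x + vec 0 0 (-h) ∈ V a h (i + 1) 0 := by
  obtain ⟨k, l, n, rfl⟩ := hx
  fin_cases i
  · refine ⟨k, l, n - 1, ?_⟩
    rw [vec_add]
    congr 1 <;> simp
    ring
  · refine ⟨k, l, n, ?_⟩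
    rw [vec_add]
    congr 1 <;> simp
    ring

lemma add_w_mem_V {i j : Fin 2} (hx : x ∈ V a h i j) (r : Fin 3) :
    x + w a i r ∈ V a h (i + 1) (j + 1) := by
  obtain ⟨k, l, n, rfl⟩ := hx
  obtain ⟨m, s, hw⟩ := w_eq_vec a i r
  rw [hw, vec_add]
  fin_cases i
  · refine ⟨k + m, l + s, n, ?_⟩
    fin_cases j <;> congr 1 <;> simp <;> ring
  · refine ⟨k - m, l - s, n, ?_⟩
    fin_cases j <;> congr 1 <;> simp <;> ring

lemma zero_mem_V (a h : ℝ) : (0 : E) ∈ V a h 0 0 := by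
  refine ⟨0, 0, 0, ?_⟩
  ext r
  fin_cases r <;> simp [vec]

/-- The four vertex families are pairwise disjoint. -/
lemma V_index_unique (ha : 0 < a) (hh : 0 < h) {i j i' j' : Fin 2}
    (hx : x ∈ V a h i j) (hx' : x ∈ V a h i' j') : i = i' ∧ j = j' := by
  obtain ⟨k, l, n, rfl⟩ := hx
  obtain ⟨k', l', n', e⟩ := hx'
  obtain ⟨ex, -, ez⟩ := vec_inj e
  have ex := mul_left_cancel₀ ha.ne' ex
  have ez := mul_left_cancel₀ hh.ne' ez
  have ex2 : (2 * ((-1) ^ ((i : ℕ) + 1) * (if j = 1 then 1 else 0)) + 3 * k : ℤ) =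
      2 * ((-1) ^ ((i' : ℕ) + 1) * (if j' = 1 then 1 else 0)) + 3 * k' := by
    have : (2 * ((-1) ^ ((i : ℕ) + 1) * (if j = 1 then 1 else 0)) + 3 * k : ℝ) =
      2 * ((-1) ^ ((i' : ℕ) + 1) * (if j' = 1 then 1 else 0)) + 3 * k' := by linarith
    exact_mod_cast this
  have ez2 : (2 * n + (if i ≠ j then 1 else 0) : ℤ) = 2 * n' + (if i' ≠ j' then 1 else 0) := by
    exact_mod_cast ez
  clear ex ez e
  fin_cases i <;> fin_cases j <;> fin_cases i' <;> fin_cases j' <;> simp at ex2 ez2 ⊢ <;> omega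

lemma measurableSet_V (a h : ℝ) (i j : Fin 2) : MeasurableSet (V a h i j) := by
  have : V a h i j = Set.range (fun t : ℤ × ℤ × ℤ =>
      vec (a * ((-1 : ℝ) ^ ((i : ℕ) + 1) * (if j = 1 then (1 : ℝ) else 0) + (3 / 2) * t.1))
        (a * ((√3 / 2) * t.1 + √3 * t.2.1))
        (h * (2 * t.2.2 + (if i ≠ j then (1 : ℝ) else 0)))) := by
    ext v
    simp only [V, Set.mem_ofPred_eq, Set.mem_range, Prod.exists, eq_comm]
  rw [this]
  exact (Set.countable_range _).measurableSet

/-- The function on `ℝ³` equal to `g i j` on `V i j` and to `0` off the lattice. -/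
def ofType (a h : ℝ) (g : Fin 2 → Fin 2 → ℝ) (x : E) : ℝ :=
  ∑ i, ∑ j, (V a h i j).indicator (fun _ => g i j) x

lemma ofType_of_mem (ha : 0 < a) (hh : 0 < h) (g : Fin 2 → Fin 2 → ℝ) {i j : Fin 2}
    (hx : x ∈ V a h i j) : ofType a h g x = g i j := by
  have key : ∀ i' j', (V a h i' j').indicator (fun _ => g i' j') x =
      if i' = i then (if j' = j then g i' j' else 0) else 0 := by
    intro i' j'
    by_cases hx' : x ∈ V a h i' j'
    · obtain ⟨rfl, rfl⟩ := V_index_unique ha hh hx hx'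
      simp [hx]
    · rw [Set.indicator_of_notMem hx']
      split_ifs with h1 h2
      · subst h1 h2
        exact absurd hx hx'
      · rfl
      · rfl
  simp only [ofType, key]
  simp

lemma ofType_of_forall_notMem (g : Fin 2 → Fin 2 → ℝ) (hx : ∀ i j, x ∉ V a h i j) :
    ofType a h g x = 0 := by
  simp [ofType, hx]

lemma measurable_ofType (a h : ℝ) (g : Fin 2 → Fin 2 → ℝ) : Measurable (ofType a h g) :=
  Finset.measurable_fun_sum _ fun i _ => Finset.measurable_fun_sum _ fun j _ =>
    measurable_const.indicator (measurableSet_V a h i j)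

lemma ofType_bounded (a h : ℝ) (g : Fin 2 → Fin 2 → ℝ) :
    ∃ C, ∀ x, |ofType a h g x| ≤ C := by
  refine ⟨∑ i, ∑ j, |g i j|, fun x => ?_⟩
  refine (Finset.abs_sum_le_sum_abs _ _).trans (Finset.sum_le_sum fun i _ => ?_)
  refine (Finset.abs_sum_le_sum_abs _ _).trans (Finset.sum_le_sum fun j _ => ?_)
  by_cases hx : x ∈ V a h i j <;> simp [hx]

lemma indicator_V_eq (ha : 0 < a) (hh : 0 < h) {i j : Fin 2} (hx : x ∈ V a h i j)
    (i' j' : Fin 2) : (V a h i' j').indicator (fun _ => (1 : ℝ)) x =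
      if i' = i ∧ j' = j then 1 else 0 := by
  by_cases hx' : x ∈ V a h i' j'
  · obtain ⟨rfl, rfl⟩ := V_index_unique ha hh hx hx'
    simp [hx]
  · rw [Set.indicator_of_notMem hx', if_neg]
    rintro ⟨rfl, rfl⟩
    exact hx' hx

lemma mem_V_iff (ha : 0 < a) (hh : 0 < h) {i j : Fin 2} (hx : x ∈ V a h i j) (i' j' : Fin 2) :
    x ∈ V a h i' j' ↔ i' = i ∧ j' = j :=
  ⟨fun hx' => V_index_unique ha hh hx' hx, by rintro ⟨rfl, rfl⟩; exact hx⟩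

variable {Ω : Type}

lemma iP_eq_ofType (ha : 0 < a) (hh : 0 < h) (S : ℕ → Ω → E) (n : ℕ) (ω : Ω) :
    iP a h S n ω = ofType a h (fun i _ => (-1) ^ (i : ℕ)) (S n ω) := by
  by_cases hx : ∃ i j, S n ω ∈ V a h i j
  · obtain ⟨i, j, hx⟩ := hx
    rw [ofType_of_mem ha hh _ hx]
    fin_cases i <;> fin_cases j <;> simp [iP, Set.indicator, mem_V_iff ha hh hx]
  · push Not at hx
    rw [ofType_of_forall_notMem _ hx]
    simp [iP, Set.indicator, hx]

lemma jP_eq_ofType (ha : 0 < a) (hh : 0 < h) (S : ℕ → Ω → E) (n : ℕ) (ω : Ω) :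
    jP a h S n ω = ofType a h (fun _ j => (-1) ^ (j : ℕ)) (S n ω) := by
  by_cases hx : ∃ i j, S n ω ∈ V a h i j
  · obtain ⟨i, j, hx⟩ := hx
    rw [ofType_of_mem ha hh _ hx]
    fin_cases i <;> fin_cases j <;> simp [jP, Set.indicator, mem_V_iff ha hh hx]
  · push Not at hx
    rw [ofType_of_forall_notMem _ hx]
    simp [jP, Set.indicator, hx]

lemma kP_eq_ofType (ha : 0 < a) (hh : 0 < h) (S : ℕ → Ω → E) (n : ℕ) (ω : Ω) :
    kP a h S n ω = ofType a h (fun i j => (-1) ^ (i : ℕ) * (-1) ^ (j : ℕ)) (S n ω) := by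
  by_cases hx : ∃ i j, S n ω ∈ V a h i j
  · obtain ⟨i, j, hx⟩ := hx
    rw [ofType_of_mem ha hh _ hx]
    fin_cases i <;> fin_cases j <;> simp [kP, Set.indicator, mem_V_iff ha hh hx]
  · push Not at hx
    rw [ofType_of_forall_notMem _ hx]
    simp [kP, Set.indicator, hx]

namespace IsRWG

variable [MeasurableSpace Ω] {P : Measure Ω} {p α : ℝ} {q : Fin 2 → Fin 2 → Fin 3 → ℝ}
  {S : ℕ → Ω → E} {F : ℕ → MeasurableSpace Ω}

lemma filtration_le_s16 (hRW : IsRWG P a h p α q S F) (n : ℕ) : F n ≤ ‹MeasurableSpace Ω› := by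
  rw [hRW.hF n]
  exact (measurable_pi_lambda _ fun k => (hRW.hSmeas _).sub (hRW.hSmeas _)).comap_le

/-- One-step conditional expectation of a function of the vertex type. -/
lemma condExp_ofType (hRW : IsRWG P a h p α q S F) (n : ℕ) (g : Fin 2 → Fin 2 → ℝ) :
    P[fun ω => ofType a h g (S (n + 1) ω)|F n] =ᵐ[P] fun ω => ofType a h
      (fun i j => if j = 0 then p * g (i + 1) 0 + (1 - p) * g (i + 1) 1 else g (i + 1) 0)
      (S n ω) := by
  refine (hRW.hTrans n _ (measurable_ofType a h g) (ofType_bounded a h g)).trans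
    (Eventually.of_forall fun ω => ?_)
  have ha := hRW.ha
  have hh := hRW.hh
  beta_reduce
  by_cases hx : ∃ i j, S n ω ∈ V a h i j
  · obtain ⟨i, j, hx⟩ := hx
    have hw : ∀ k, ofType a h g (S n ω + w a i k) = g (i + 1) (j + 1) :=
      fun k => ofType_of_mem ha hh g (add_w_mem_V hx k)
    rw [ofType_of_mem ha hh _ hx, Finset.sum_eq_single_of_mem i (Finset.mem_univ i)]
    · simp only [hw, indicator_V_eq ha hh hx, Fin.sum_univ_three]
      fin_cases j
      · have hu := ofType_of_mem ha hh g (add_vec_up_mem_V hx)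
        have hd := ofType_of_mem ha hh g (add_vec_down_mem_V hx)
        rw [hu, hd]
        simp
        linear_combination g (i + 1) 1 * hRW.hqsum0 i
      · simp
        linear_combination g (i + 1) 0 * hRW.hqsum1 i
    · intro i' _ hi
      simp [indicator_V_eq ha hh hx, hi]
  · push Not at hx
    simp [ofType_of_forall_notMem, hx]

/-- Almost surely, the horizontal type alternates deterministically along the walk. -/
lemma ae_mem_V (hRW : IsRWG P a h p α q S F) (n : ℕ) :
    ∀ᵐ ω ∂P, ∃ j, S n ω ∈ V a h (Fin.ofNat 2 n) j := by
  have := hRW.prob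
  induction n with
  | zero => exact Eventually.of_forall fun ω => ⟨0, by rw [hRW.hS0]; exact zero_mem_V a h⟩
  | succ n ih =>
    set r : Fin 2 := Fin.ofNat 2 (n + 1) with hr
    have hsucc : Fin.ofNat 2 n + 1 = r := by
      ext
      simp [hr, Fin.val_add]
    set f : E → ℝ := ofType a h (fun i _ => if i = r then 1 else 0) with hf
    have hcond : P[fun ω => f (S (n + 1) ω)|F n] =ᵐ[P] fun _ => 1 := by
      filter_upwards [hRW.condExp_ofType n (fun i _ => if i = r then 1 else 0), ih]
        with ω hω ⟨j, hj⟩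
      rw [hω, ofType_of_mem hRW.ha hRW.hh _ hj]
      simp only [hsucc]
      simp
    obtain ⟨C, hC⟩ := ofType_bounded a h (fun i _ => if i = r then 1 else 0)
    have hint : Integrable (fun ω => f (S (n + 1) ω)) P :=
      Integrable.of_bound ((measurable_ofType a h _).comp (hRW.hSmeas _)).aestronglyMeasurable C
        (Eventually.of_forall fun ω => hC _)
    have hle : ∀ x, f x ≤ 1 ∧ ((¬ ∃ j, x ∈ V a h r j) → f x ≠ 1) := by
      intro x
      by_cases hx : ∃ i j, x ∈ V a h i j
      · obtain ⟨i, j, hx⟩ := hx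
        rw [hf, ofType_of_mem hRW.ha hRW.hh _ hx]
        by_cases hi : i = r
        · subst hi
          exact ⟨by simp, fun hn => absurd ⟨j, hx⟩ hn⟩
        · simp [hi]
      · push Not at hx
        rw [hf, ofType_of_forall_notMem _ hx]
        simp
    have hzero : ∫ ω, (1 - f (S (n + 1) ω)) ∂P = 0 := by
      rw [integral_sub (integrable_const _) hint,
        ← integral_condExp (hRW.filtration_le_s16 n) (f := fun ω => f (S (n + 1) ω)),
        integral_congr_ae hcond]
      simp
    have hae := (integral_eq_zero_iff_of_nonneg (fun ω => sub_nonneg.2 (hle (S (n + 1) ω)).1)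
      ((integrable_const _).sub hint)).1 hzero
    filter_upwards [hae] with ω hω
    by_contra hn
    exact (hle _).2 hn (sub_eq_zero.1 hω).symm

end IsRWG

end RWG

theorem rwg_indicator_structure {Ω : Type} [MeasurableSpace Ω] (P : Measure Ω)
    (a h p α : ℝ) (q : Fin 2 → Fin 2 → Fin 3 → ℝ)
    (S : ℕ → Ω → RWG.E) (F : ℕ → MeasurableSpace Ω)
    (hRW : RWG.IsRWG P a h p α q S F) :
    (∀ n : ℕ, ∀ᵐ ω ∂P,
      RWG.iP a h S n ω = (-1 : ℝ) ^ n ∧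
      RWG.iP a h S n ω * RWG.jP a h S n ω = RWG.kP a h S n ω ∧
      RWG.jP a h S n ω * RWG.kP a h S n ω = RWG.iP a h S n ω ∧
      RWG.iP a h S n ω * RWG.kP a h S n ω = RWG.jP a h S n ω) ∧
    (∀ n : ℕ,
      (P[fun ω => RWG.jP a h S (n + 1) ω|F n] =ᵐ[P]
        fun ω => p - (1 - p) * RWG.jP a h S n ω) ∧
      (P[fun ω => RWG.kP a h S (n + 1) ω|F n] =ᵐ[P]
        fun ω => (1 - p) * RWG.kP a h S n ω - p * RWG.iP a h S n ω)) := by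
  have ha := hRW.ha
  have hh := hRW.hh
  simp only [RWG.iP_eq_ofType ha hh, RWG.jP_eq_ofType ha hh, RWG.kP_eq_ofType ha hh]
  refine ⟨fun n => ?_, fun n => ⟨?_, ?_⟩⟩
  · filter_upwards [hRW.ae_mem_V n] with ω ⟨j, hj⟩
    simp only [RWG.ofType_of_mem ha hh _ hj]
    have hsq : ∀ m : ℕ, (-1 : ℝ) ^ m * (-1) ^ m = 1 := fun m => by
      rw [← mul_pow]; simp
    have hi := hsq (Fin.ofNat 2 n : ℕ)
    have hj' := hsq (j : ℕ)
    refine ⟨?_, trivial, ?_, ?_⟩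
    · rw [Fin.val_ofNat, ← neg_one_pow_eq_pow_mod_two]
    · linear_combination (-1 : ℝ) ^ (Fin.ofNat 2 n : ℕ) * hj'
    · linear_combination (-1 : ℝ) ^ (j : ℕ) * hi
  · filter_upwards [hRW.condExp_ofType n (fun _ j => (-1) ^ (j : ℕ)), hRW.ae_mem_V n]
      with ω hω ⟨j, hj⟩
    rw [hω]
    simp only [RWG.ofType_of_mem ha hh _ hj]
    fin_cases j <;> simp
    ring
  · filter_upwards [hRW.condExp_ofType n (fun i j => (-1) ^ (i : ℕ) * (-1) ^ (j : ℕ)),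
      hRW.ae_mem_V n] with ω hω ⟨j, hj⟩
    rw [hω]
    simp only [RWG.ofType_of_mem ha hh _ hj]
    generalize Fin.ofNat 2 n = i
    fin_cases i <;> fin_cases j <;> simp <;> ring
end
end
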